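/- For all x, y, z ∈ B^ℕ such that val(z) equals the fractional part of val(x) + val(y), it holds that h̄(x) − h̄(y) ≤ h̄(z) ≤ h̄(x) + h̄(y). -/

import Mathlib

open Filter Topology

/-- The factor of length `len` of the sequence `x` starting at position `i`. -/
def factor (x : ℕ → Bool) (i len : ℕ) : List Bool :=
  List.ofFn (fun j : Fin len => x (i + j))

/-- Number of (possibly overlapping) occurrences of the word `u`
in the prefix `x[0:n)` of the sequence `x`. -/
def occ (x : ℕ → Bool) (n : ℕ) (u : List Bool) : ℕ :=
  ((Finset.range (n + 1 - u.length)).filter (fun i => factor x i u.length = u)).card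

/-- Non-aligned `ℓ`-block entropy of the prefix `x[0:n)`
(logs are base 2, with the convention `0 · log 0 = 0`). -/
noncomputable def hBlock (ℓ : ℕ) (x : ℕ → Bool) (n : ℕ) : ℝ :=
  -(1 / (ℓ : ℝ)) * ∑ u : Fin ℓ → Bool,
    ((occ x n (List.ofFn u) : ℝ) / ((n : ℝ) - ℓ + 1)) *
      Real.logb 2 ((occ x n (List.ofFn u) : ℝ) / ((n : ℝ) - ℓ + 1))

/-- `h̲(x) = lim_{ℓ→∞} liminf_{n→∞} h_ℓ(x[0:n))` (the limit in `ℓ` exists). -/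
noncomputable def hLow (x : ℕ → Bool) : ℝ :=
  atTop.liminf fun ℓ => atTop.liminf fun n => hBlock ℓ x n

/-- `h̄(x) = lim_{ℓ→∞} limsup_{n→∞} h_ℓ(x[0:n))` (the limit in `ℓ` exists). -/
noncomputable def hUp (x : ℕ → Bool) : ℝ :=
  atTop.limsup fun ℓ => atTop.limsup fun n => hBlock ℓ x n

/-- `γ_ℓ(x[0:n))`: normalized minimal number of prediction errors when predicting
`x[i]` from the preceding `ℓ` symbols `x[i-ℓ:i)`, for `i ∈ {ℓ,…,n-1}`. -/
noncomputable def gammaWord (ℓ : ℕ) (x : ℕ → Bool) (n : ℕ) : ℝ :=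
  (1 / ((n : ℝ) - ℓ)) *
    ((Finset.univ : Finset ((Fin ℓ → Bool) → Bool)).inf' Finset.univ_nonempty
      (fun f => ((((Finset.Ico ℓ n).filter
        (fun i => x i ≠ f (fun j => x (i - ℓ + j)))).card : ℝ))))

/-- `β_ℓ(x[0:n))`: normalized minimal number of prediction errors when predicting
`x[i]` from the following `ℓ` symbols `x[i+1:i+ℓ+1)`, for `i ∈ {0,…,n-ℓ-1}`. -/
noncomputable def betaWord (ℓ : ℕ) (x : ℕ → Bool) (n : ℕ) : ℝ :=
  (1 / ((n : ℝ) - ℓ)) *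
    ((Finset.univ : Finset ((Fin ℓ → Bool) → Bool)).inf' Finset.univ_nonempty
      (fun f => ((((Finset.range (n - ℓ)).filter
        (fun i => x i ≠ f (fun j => x (i + 1 + j)))).card : ℝ))))

/-- `γ̲(x) = lim_{ℓ→∞} liminf_{n→∞} γ_ℓ(x[0:n))` (the limit in `ℓ` exists, by monotonicity). -/
noncomputable def gammaLow (x : ℕ → Bool) : ℝ :=
  atTop.liminf fun ℓ => atTop.liminf fun n => gammaWord ℓ x n

/-- `γ̄(x) = lim_{ℓ→∞} limsup_{n→∞} γ_ℓ(x[0:n))` (the limit in `ℓ` exists, by monotonicity). -/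
noncomputable def gammaUp (x : ℕ → Bool) : ℝ :=
  atTop.limsup fun ℓ => atTop.limsup fun n => gammaWord ℓ x n

/-- `β̲(x) = lim_{ℓ→∞} liminf_{n→∞} β_ℓ(x[0:n))` (the limit in `ℓ` exists, by monotonicity). -/
noncomputable def betaLow (x : ℕ → Bool) : ℝ :=
  atTop.liminf fun ℓ => atTop.liminf fun n => betaWord ℓ x n

/-- `β̄(x) = lim_{ℓ→∞} limsup_{n→∞} β_ℓ(x[0:n))` (the limit in `ℓ` exists, by monotonicity). -/
noncomputable def betaUp (x : ℕ → Bool) : ℝ :=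
  atTop.limsup fun ℓ => atTop.limsup fun n => betaWord ℓ x n

/-- Binary Shannon entropy function `H(α) = -α log α - (1-α) log (1-α)` (base-2 logs). -/
noncomputable def binEntropy (a : ℝ) : ℝ :=
  -(a * Real.logb 2 a) - (1 - a) * Real.logb 2 (1 - a)

/-- Conditional block entropy `Hc^{n,ℓ}(x)`:
`-Σ_{ā ∈ B^ℓ, a ∈ B, p(ā·a) > 0} p(ā·a) · log (p(ā·a)/p(ā))`, where
`p(ā) = occ(x[0:n-1), ā)/(n-ℓ)` and `p(ā·a) = occ(x[0:n), ā·a)/(n-ℓ)`. -/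
noncomputable def condEntropy (ℓ : ℕ) (x : ℕ → Bool) (n : ℕ) : ℝ :=
  -∑ u : Fin ℓ → Bool, ∑ a : Bool,
    (if 0 < ((occ x n (List.ofFn u ++ [a]) : ℝ) / ((n : ℝ) - ℓ)) then
      ((occ x n (List.ofFn u ++ [a]) : ℝ) / ((n : ℝ) - ℓ)) *
        Real.logb 2 (((occ x n (List.ofFn u ++ [a]) : ℝ) / ((n : ℝ) - ℓ)) /
          ((occ x (n - 1) (List.ofFn u) : ℝ) / ((n : ℝ) - ℓ)))
    else 0)

/-- The real number in `[0,1]` denoted by the binary sequence `x`. -/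
noncomputable def val (x : ℕ → Bool) : ℝ :=
  ∑' n : ℕ, (if x n then (1 : ℝ) else 0) / 2 ^ (n + 1)

/-!
Write `Tⁱx` for `x` with its first `i` symbols dropped. An integer relation
`k·val a = s·val b + t·val c + m` with `k ≠ 0` persists along the shift, up to bounded integer
carries: `rᵢ := k·val (Tⁱa) - s·val (Tⁱb) - t·val (Tⁱc)` is an integer with
`|rᵢ| ≤ |k| + |s| + |t|`. Since `2^ℓ·val (Tⁱx)` is the integer written by the `ℓ`-block of `x` at
`i` plus `val (Tⁱ⁺ˡx)`, the `ℓ`-blocks of `b` and `c` at `i` together with the pair `(rᵢ, rᵢ₊ₗ)`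
determine the `ℓ`-block of `a` at `i`. By subadditivity of Shannon entropy the block entropy of `a`
is thus at most the sum of those of `b` and `c` plus a term `O(1/ℓ)`.

The upper bound is the relation `val z = val x + val y + m`, and the lower one is
`val x = val z - val y - m`.
-/

open scoped BigOperators

section EmpiricalEntropy

variable {ι α β : Type*} [DecidableEq α] [DecidableEq β]

/-- The relative frequency of the value `a` among the samples `f i`, `i ∈ s`. -/
noncomputable def relFreq (s : Finset ι) (f : ι → α) (a : α) : ℝ :=
  (s.filter fun i => f i = a).card / s.card

/-- The Shannon entropy, in bits, of the empirical distribution of the samples `f i`, `i ∈ s`.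
Averaging `-log p` over samples instead of summing `-p log p` over values keeps zero frequencies
out of the logarithm and does not need `α` to be finite. -/
noncomputable def empEntropy (s : Finset ι) (f : ι → α) : ℝ :=
  𝔼 i ∈ s, -Real.logb 2 (relFreq s f (f i))

variable {s : Finset ι} {f : ι → α} {g : ι → β}

lemma relFreq_nonneg (s : Finset ι) (f : ι → α) (a : α) : 0 ≤ relFreq s f a := by
  unfold relFreq
  positivity

lemma relFreq_le_one (s : Finset ι) (f : ι → α) (a : α) : relFreq s f a ≤ 1 :=
  div_le_one_of_le₀ (mod_cast Finset.card_filter_le _ _) (Nat.cast_nonneg _)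

lemma relFreq_apply_pos {i : ι} (hi : i ∈ s) : 0 < relFreq s f (f i) := by
  have fiber_pos : 0 < (s.filter fun j => f j = f i).card :=
    Finset.card_pos.mpr ⟨i, Finset.mem_filter.mpr ⟨hi, rfl⟩⟩
  have sample_pos : 0 < s.card := Finset.card_pos.mpr ⟨i, hi⟩
  unfold relFreq
  positivity

lemma expect_comp_eq_sum_relFreq [Fintype α] (s : Finset ι) (f : ι → α) (φ : α → ℝ) :
    𝔼 i ∈ s, φ (f i) = ∑ a, relFreq s f a * φ a := by
  rw [Finset.expect_eq_sum_div_card, ← Finset.sum_fiberwise s f, Finset.sum_div]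
  refine Finset.sum_congr rfl fun a _ => ?_
  have sum_fiber : ∑ i ∈ s with f i = a, φ (f i) = (s.filter fun i => f i = a).card * φ a := by
    rw [← nsmul_eq_mul]
    exact Finset.sum_eq_card_nsmul fun i hi => by rw [(Finset.mem_filter.mp hi).2]
  rw [sum_fiber, relFreq, div_mul_eq_mul_div]

lemma sum_relFreq_le_one [Fintype α] (s : Finset ι) (f : ι → α) : ∑ a, relFreq s f a ≤ 1 := by
  rcases s.eq_empty_or_nonempty with rfl | hs
  · simp [relFreq]
  · simpa [hs] using (expect_comp_eq_sum_relFreq s f fun _ => 1).ge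

lemma empEntropy_nonneg (s : Finset ι) (f : ι → α) : 0 ≤ empEntropy s f :=
  Finset.expect_nonneg fun _ _ => neg_nonneg.mpr <|
    Real.logb_nonpos one_lt_two (relFreq_nonneg s f _) (relFreq_le_one s f _)

lemma expect_div_relFreq_le_one [Fintype α] {q : α → ℝ} (q_nonneg : ∀ a, 0 ≤ q a)
    (q_sum : ∑ a, q a ≤ 1) : 𝔼 i ∈ s, q (f i) / relFreq s f (f i) ≤ 1 :=
  calc 𝔼 i ∈ s, q (f i) / relFreq s f (f i)
      = ∑ a, relFreq s f a * (q a / relFreq s f a) :=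
        expect_comp_eq_sum_relFreq s f fun a => q a / relFreq s f a
    _ ≤ ∑ a, q a := by
        refine Finset.sum_le_sum fun a _ => ?_
        rw [mul_div_left_comm]
        exact mul_le_of_le_one_right (q_nonneg a) (div_self_le_one _)
    _ ≤ 1 := q_sum

lemma empEntropy_le_crossEntropy [Fintype α] {q : α → ℝ} (q_nonneg : ∀ a, 0 ≤ q a)
    (q_pos : ∀ i ∈ s, 0 < q (f i)) (q_sum : ∑ a, q a ≤ 1) :
    empEntropy s f ≤ 𝔼 i ∈ s, -Real.logb 2 (q (f i)) := by
  rcases s.eq_empty_or_nonempty with rfl | hs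
  · simp [empEntropy]
  have log_ratio_le : ∀ i ∈ s, -Real.logb 2 (relFreq s f (f i)) - -Real.logb 2 (q (f i)) ≤
      (q (f i) / relFreq s f (f i) - 1) / Real.log 2 := fun i hi => by
    have p_pos : 0 < relFreq s f (f i) := relFreq_apply_pos hi
    calc -Real.logb 2 (relFreq s f (f i)) - -Real.logb 2 (q (f i))
        = Real.log (q (f i) / relFreq s f (f i)) / Real.log 2 := by
          rw [Real.log_div (q_pos i hi).ne' p_pos.ne', Real.logb, Real.logb]
          ring
      _ ≤ (q (f i) / relFreq s f (f i) - 1) / Real.log 2 := by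
          gcongr
          exact Real.log_le_sub_one_of_pos (div_pos (q_pos i hi) p_pos)
  refine sub_nonpos.mp ?_
  calc empEntropy s f - 𝔼 i ∈ s, -Real.logb 2 (q (f i))
      ≤ 𝔼 i ∈ s, (q (f i) / relFreq s f (f i) - 1) / Real.log 2 := by
        rw [empEntropy, ← Finset.expect_sub_distrib]
        exact Finset.expect_le_expect log_ratio_le
    _ = (𝔼 i ∈ s, q (f i) / relFreq s f (f i) - 1) / Real.log 2 := by
        rw [← Finset.expect_div, Finset.expect_sub_distrib, Finset.expect_const hs]
    _ ≤ 0 := div_nonpos_of_nonpos_of_nonneg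
        (sub_nonpos.mpr (expect_div_relFreq_le_one q_nonneg q_sum)) (Real.log_pos one_lt_two).le

lemma empEntropy_le_logb_card [Fintype α] (s : Finset ι) (f : ι → α) :
    empEntropy s f ≤ Real.logb 2 (Fintype.card α) := by
  rcases s.eq_empty_or_nonempty with rfl | hs
  · rw [empEntropy, Finset.expect_empty]
    exact div_nonneg (Real.log_natCast_nonneg _) (Real.log_pos one_lt_two).le
  have : Nonempty α := ⟨f hs.choose⟩
  have uniform_pos : (0 : ℝ) < (Fintype.card α : ℝ)⁻¹ :=
    inv_pos.mpr (Nat.cast_pos.mpr Fintype.card_pos)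
  calc empEntropy s f ≤ 𝔼 _i ∈ s, -Real.logb 2 (Fintype.card α : ℝ)⁻¹ :=
        empEntropy_le_crossEntropy (q := fun _ => (Fintype.card α : ℝ)⁻¹)
          (fun _ => uniform_pos.le) (fun _ _ => uniform_pos) (by simp)
    _ = Real.logb 2 (Fintype.card α) := by
        rw [Finset.expect_const hs, Real.logb_inv, neg_neg]

lemma empEntropy_prodMk_le [Finite α] [Finite β] (s : Finset ι) (f : ι → α) (g : ι → β) :
    empEntropy s (fun i => (f i, g i)) ≤ empEntropy s f + empEntropy s g := by
  have := Fintype.ofFinite α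
  have := Fintype.ofFinite β
  let q (ab : α × β) : ℝ := relFreq s f ab.1 * relFreq s g ab.2
  have q_sum : ∑ ab, q ab ≤ 1 := by
    rw [Fintype.sum_prod_type, ← Fintype.sum_mul_sum]
    exact mul_le_one₀ (sum_relFreq_le_one s f)
      (Finset.sum_nonneg fun b _ => relFreq_nonneg s g b) (sum_relFreq_le_one s g)
  calc empEntropy s (fun i => (f i, g i))
      ≤ 𝔼 i ∈ s, -Real.logb 2 (q (f i, g i)) :=
        empEntropy_le_crossEntropy
          (fun _ => mul_nonneg (relFreq_nonneg s f _) (relFreq_nonneg s g _))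
          (fun _ hi => mul_pos (relFreq_apply_pos hi) (relFreq_apply_pos hi)) q_sum
    _ = empEntropy s f + empEntropy s g := by
        rw [empEntropy, empEntropy, ← Finset.expect_add_distrib]
        refine Finset.expect_congr rfl fun i hi => ?_
        rw [Real.logb_mul (relFreq_apply_pos hi).ne' (relFreq_apply_pos hi).ne', neg_add]

lemma empEntropy_le_of_determined (h : ∀ i ∈ s, ∀ j ∈ s, g i = g j → f i = f j) :
    empEntropy s f ≤ empEntropy s g := by
  refine Finset.expect_le_expect fun i hi => neg_le_neg ?_
  have relFreq_le : relFreq s g (g i) ≤ relFreq s f (f i) := by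
    unfold relFreq
    gcongr with j hj
    exact fun hji => h j hj i hi hji
  exact Real.logb_le_logb_of_le one_lt_two (relFreq_apply_pos hi) relFreq_le

end EmpiricalEntropy

section BlockEntropy

/-- The block `x[i:i+ℓ)` as a function on `Fin ℓ`, so that blocks of length `ℓ` form a finite
type. -/
def block (x : ℕ → Bool) (i ℓ : ℕ) : Fin ℓ → Bool := fun j => x (i + j)

lemma occ_ofFn (x : ℕ → Bool) (n : ℕ) {ℓ : ℕ} (u : Fin ℓ → Bool) :
    occ x n (List.ofFn u) =
      ((Finset.range (n + 1 - ℓ)).filter fun i => block x i ℓ = u).card := by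
  rw [occ, List.length_ofFn]
  exact congrArg Finset.card (Finset.filter_congr fun _ _ => List.ofFn_injective.eq_iff)

lemma hBlock_eq_empEntropy_div {ℓ n : ℕ} (hℓn : ℓ ≤ n) (x : ℕ → Bool) :
    hBlock ℓ x n = empEntropy (Finset.range (n + 1 - ℓ)) (fun i => block x i ℓ) / ℓ := by
  have cast_length : (n : ℝ) - ℓ + 1 = ((n + 1 - ℓ : ℕ) : ℝ) := by
    rw [Nat.cast_sub (by omega)]
    push_cast
    ring
  have occ_div (u : Fin ℓ → Bool) : (occ x n (List.ofFn u) : ℝ) / ((n : ℝ) - ℓ + 1) =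
      relFreq (Finset.range (n + 1 - ℓ)) (fun i => block x i ℓ) u := by
    rw [occ_ofFn, cast_length, relFreq, Finset.card_range]
  simp only [hBlock, occ_div, empEntropy]
  rw [Finset.expect_neg_distrib, expect_comp_eq_sum_relFreq (φ := fun u => Real.logb 2 _)]
  ring

lemma hBlock_mem_Icc {ℓ n : ℕ} (hℓn : ℓ ≤ n) (x : ℕ → Bool) : hBlock ℓ x n ∈ Set.Icc 0 1 := by
  rw [hBlock_eq_empEntropy_div hℓn]
  refine ⟨div_nonneg (empEntropy_nonneg _ _) ℓ.cast_nonneg,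
    div_le_one_of_le₀ ?_ ℓ.cast_nonneg⟩
  simpa [Real.logb_pow] using
    empEntropy_le_logb_card (Finset.range (n + 1 - ℓ)) fun i => block x i ℓ

lemma hBlock_le_add_of_determined {κ : Type*} [Fintype κ] {a b c : ℕ → Bool} {ℓ n : ℕ}
    (hℓn : ℓ ≤ n) (label : ℕ → κ)
    (h : ∀ i j, block b i ℓ = block b j ℓ → block c i ℓ = block c j ℓ → label i = label j →
      block a i ℓ = block a j ℓ) :
    hBlock ℓ a n ≤ hBlock ℓ b n + hBlock ℓ c n + Real.logb 2 (Fintype.card κ) / ℓ := by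
  classical
  simp only [hBlock_eq_empEntropy_div hℓn, ← add_div]
  set s := Finset.range (n + 1 - ℓ)
  gcongr
  calc empEntropy s (fun i => block a i ℓ)
      ≤ empEntropy s (fun i => ((block b i ℓ, block c i ℓ), label i)) := by
        refine empEntropy_le_of_determined fun i _ j _ hij => ?_
        simp only [Prod.mk.injEq] at hij
        exact h i j hij.1.1 hij.1.2 hij.2
    _ ≤ empEntropy s (fun i => (block b i ℓ, block c i ℓ)) + empEntropy s label :=
        empEntropy_prodMk_le _ _ _
    _ ≤ empEntropy s (fun i => block b i ℓ) + empEntropy s (fun i => block c i ℓ) +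
          Real.logb 2 (Fintype.card κ) :=
        add_le_add (empEntropy_prodMk_le _ _ _) (empEntropy_le_logb_card _ _)

end BlockEntropy

section Limsup

variable {ι : Type*} {l : Filter ι} [l.NeBot] {u v w e : ι → ℝ} {p q : ℝ}

lemma limsup_mem_Icc (hu : ∀ᶠ i in l, u i ∈ Set.Icc p q) : limsup u l ∈ Set.Icc p q := by
  have ge : ∀ᶠ i in l, p ≤ u i := hu.mono fun _ h => h.1
  have le : ∀ᶠ i in l, u i ≤ q := hu.mono fun _ h => h.2
  exact ⟨le_limsup_of_frequently_le ge.frequently (isBoundedUnder_of_eventually_le le),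
    limsup_le_of_le (isBoundedUnder_of_eventually_ge ge).isCoboundedUnder_le le⟩

lemma limsup_le_add_of_tendsto (hu : ∀ᶠ i in l, u i ∈ Set.Icc p q)
    (hv : ∀ᶠ i in l, v i ∈ Set.Icc p q) (hw : ∀ᶠ i in l, w i ∈ Set.Icc p q) {δ : ℝ}
    (he : Tendsto e l (𝓝 δ)) (hle : ∀ᶠ i in l, u i ≤ v i + w i + e i) :
    limsup u l ≤ limsup v l + limsup w l + δ := by
  have bdd_ge {r : ι → ℝ} (hr : ∀ᶠ i in l, r i ∈ Set.Icc p q) : l.IsBoundedUnder (· ≥ ·) r :=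
    isBoundedUnder_of_eventually_ge (hr.mono fun _ h => h.1)
  have bdd_le {r : ι → ℝ} (hr : ∀ᶠ i in l, r i ∈ Set.Icc p q) : l.IsBoundedUnder (· ≤ ·) r :=
    isBoundedUnder_of_eventually_le (hr.mono fun _ h => h.2)
  have vw_ge := isBoundedUnder_ge_add (bdd_ge hv) (bdd_ge hw)
  have vw_le := isBoundedUnder_le_add (bdd_le hv) (bdd_le hw)
  calc limsup u l ≤ limsup (v + w + e) l :=
        limsup_le_limsup hle (bdd_ge hu).isCoboundedUnder_le
          (isBoundedUnder_le_add vw_le he.isBoundedUnder_le)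
    _ ≤ limsup (v + w) l + limsup e l :=
        limsup_add_le vw_ge vw_le he.isCoboundedUnder_le he.isBoundedUnder_le
    _ ≤ limsup v l + limsup w l + δ :=
        add_le_add
          (limsup_add_le (bdd_ge hv) (bdd_le hv) (bdd_ge hw).isCoboundedUnder_le (bdd_le hw))
          he.limsup_eq.le

end Limsup

lemma eventually_hBlock_mem_Icc (ℓ : ℕ) (x : ℕ → Bool) :
    ∀ᶠ n in atTop, hBlock ℓ x n ∈ Set.Icc 0 1 :=
  (eventually_ge_atTop ℓ).mono fun _ hℓn => hBlock_mem_Icc hℓn x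

lemma hUp_le_add_of_determined {κ : Type*} [Finite κ] {a b c : ℕ → Bool}
    (label : ℕ → ℕ → κ)
    (h : ∀ ℓ i j, block b i ℓ = block b j ℓ → block c i ℓ = block c j ℓ →
      label ℓ i = label ℓ j → block a i ℓ = block a j ℓ) :
    hUp a ≤ hUp b + hUp c := by
  have := Fintype.ofFinite κ
  have limsup_hBlock_mem (x : ℕ → Bool) :
      ∀ᶠ ℓ in atTop, limsup (fun n => hBlock ℓ x n) atTop ∈ Set.Icc 0 1 :=
    .of_forall fun ℓ => limsup_mem_Icc (eventually_hBlock_mem_Icc ℓ x)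
  have limsup_hBlock_le (ℓ : ℕ) : limsup (fun n => hBlock ℓ a n) atTop ≤
      limsup (fun n => hBlock ℓ b n) atTop + limsup (fun n => hBlock ℓ c n) atTop +
        Real.logb 2 (Fintype.card κ) / ℓ :=
    limsup_le_add_of_tendsto (eventually_hBlock_mem_Icc ℓ a) (eventually_hBlock_mem_Icc ℓ b)
      (eventually_hBlock_mem_Icc ℓ c) tendsto_const_nhds
      ((eventually_ge_atTop ℓ).mono fun _ hℓn => hBlock_le_add_of_determined hℓn _ (h ℓ))
  simpa only [hUp, add_zero] using
    limsup_le_add_of_tendsto (limsup_hBlock_mem a) (limsup_hBlock_mem b) (limsup_hBlock_mem c)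
      (tendsto_const_div_atTop_nhds_zero_nat _) (.of_forall limsup_hBlock_le)

section BinaryExpansion

/-- The natural number whose binary expansion is `u`. The most significant bit comes first, as in
`val`, whereas `Nat.ofBits` puts the least significant bit first. -/
def wordNum {ℓ : ℕ} (u : Fin ℓ → Bool) : ℕ := Nat.ofBits (u ∘ Fin.rev)

lemma wordNum_injective (ℓ : ℕ) : Function.Injective (wordNum (ℓ := ℓ)) := fun u v huv => by
  funext j
  have bits_eq : (wordNum u).testBit j.rev = (wordNum v).testBit j.rev := by rw [huv]
  simpa only [wordNum, Nat.testBit_ofBits_lt _ _ j.rev.isLt, Fin.eta, Function.comp_apply,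
    Fin.rev_rev] using bits_eq

lemma wordNum_block_succ (x : ℕ → Bool) (i ℓ : ℕ) :
    wordNum (block x i (ℓ + 1)) = 2 * wordNum (block x i ℓ) + (x (i + ℓ)).toNat := by
  have init_eq : (block x i (ℓ + 1) ∘ Fin.rev) ∘ Fin.succ = block x i ℓ ∘ Fin.rev := by
    funext j
    simp [block, Fin.rev_succ]
  rw [wordNum, Nat.ofBits_succ, init_eq]
  simp [wordNum, block]

/-- The sequence `x` without its first `i` symbols. -/
def shift (i : ℕ) (x : ℕ → Bool) : ℕ → Bool := fun n => x (i + n)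

lemma val_eq_ofDigits (x : ℕ → Bool) :
    val x = Real.ofDigits (b := 2) fun n => if x n then 1 else 0 := by
  refine tsum_congr fun n => ?_
  cases h : x n <;> simp [Real.ofDigitsTerm, h]

lemma val_mem_Icc (x : ℕ → Bool) : val x ∈ Set.Icc 0 1 := by
  rw [val_eq_ofDigits]
  exact ⟨Real.ofDigits_nonneg _, Real.ofDigits_le_one _⟩

lemma two_mul_val_shift (i : ℕ) (x : ℕ → Bool) :
    2 * val (shift i x) = (x i).toNat + val (shift (i + 1) x) := by
  have shift_apply_succ (n : ℕ) : shift i x (n + 1) = shift (i + 1) x n :=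
    congrArg x (by omega)
  rw [val_eq_ofDigits (shift i x), Real.ofDigits_eq_sum_add_ofDigits _ 1,
    val_eq_ofDigits (shift (i + 1) x)]
  simp only [shift_apply_succ]
  cases h : x i <;> simp [Real.ofDigitsTerm, shift, h, mul_add]

lemma two_pow_mul_val_shift (i ℓ : ℕ) (x : ℕ → Bool) :
    2 ^ ℓ * val (shift i x) = wordNum (block x i ℓ) + val (shift (i + ℓ) x) := by
  induction ℓ with
  | zero => simp [wordNum]
  | succ ℓ ih =>
    have step := two_mul_val_shift (i + ℓ) x
    rw [wordNum_block_succ, ← add_assoc]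
    push_cast
    linear_combination 2 * ih + step

lemma two_pow_mul_val (i : ℕ) (x : ℕ → Bool) :
    2 ^ i * val x = wordNum (block x 0 i) + val (shift i x) := by
  have shift_zero : shift 0 x = x := funext fun n => congrArg x n.zero_add
  simpa only [shift_zero, Nat.zero_add] using two_pow_mul_val_shift 0 i x

end BinaryExpansion

section Carry

variable {a b c : ℕ → Bool} {k s t m : ℤ}

lemma exists_int_eq_val_shift (h : k * val a = s * val b + t * val c + m) (i : ℕ) :
    ∃ r : ℤ, k * val (shift i a) = s * val (shift i b) + t * val (shift i c) + r := by
  refine ⟨2 ^ i * m - k * wordNum (block a 0 i) + s * wordNum (block b 0 i) +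
    t * wordNum (block c 0 i), ?_⟩
  push_cast
  linear_combination 2 ^ i * h - k * two_pow_mul_val i a + s * two_pow_mul_val i b +
    t * two_pow_mul_val i c

lemma abs_carry_le (h : k * val a = s * val b + t * val c + m) : |m| ≤ |k| + |s| + |t| := by
  have abs_mul_val_le (d : ℤ) (x : ℕ → Bool) : |d * val x| ≤ |d| := by
    obtain ⟨nonneg, le_one⟩ := val_mem_Icc x
    rw [abs_mul, abs_of_nonneg nonneg, Int.cast_abs]
    exact mul_le_of_le_one_right (abs_nonneg _) le_one
  have : (|m| : ℝ) ≤ |k| + |s| + |t| :=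
    calc (|m| : ℝ) = |k * val a - s * val b - t * val c| := by
          congr 1
          linear_combination -h
      _ ≤ |k * val a| + |s * val b| + |t * val c| :=
          (abs_sub _ _).trans (add_le_add_left (abs_sub _ _) _)
      _ ≤ |k| + |s| + |t| := by gcongr <;> exact abs_mul_val_le _ _
  exact_mod_cast this

lemma mul_wordNum_block {r : ℕ → ℤ}
    (hr : ∀ i, k * val (shift i a) = s * val (shift i b) + t * val (shift i c) + r i) (i ℓ : ℕ) :
    k * wordNum (block a i ℓ) =
      s * wordNum (block b i ℓ) + t * wordNum (block c i ℓ) + 2 ^ ℓ * r i - r (i + ℓ) := by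
  have over_reals : (k : ℝ) * wordNum (block a i ℓ) =
      s * wordNum (block b i ℓ) + t * wordNum (block c i ℓ) + 2 ^ ℓ * r i - r (i + ℓ) := by
    linear_combination 2 ^ ℓ * hr i - hr (i + ℓ) - k * two_pow_mul_val_shift i ℓ a +
      s * two_pow_mul_val_shift i ℓ b + t * two_pow_mul_val_shift i ℓ c
  exact_mod_cast over_reals

end Carry

theorem hUp_add_subadditive_general {a b c : ℕ → Bool} {k s t m : ℤ} (hk : k ≠ 0)
    (h : k * val a = s * val b + t * val c + m) : hUp a ≤ hUp b + hUp c := by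
  choose r hr using exists_int_eq_val_shift h
  let carry (i : ℕ) : Finset.Icc (-(|k| + |s| + |t|)) (|k| + |s| + |t|) :=
    ⟨r i, Finset.mem_Icc.mpr (abs_le.mp (abs_carry_le (hr i)))⟩
  refine hUp_le_add_of_determined (fun ℓ i => (carry i, carry (i + ℓ))) ?_
  intro ℓ i j hb hc hcarry
  obtain ⟨first_eq, last_eq⟩ : r i = r j ∧ r (i + ℓ) = r (j + ℓ) := by
    simpa [carry] using hcarry
  have mul_eq : k * wordNum (block a i ℓ) = k * wordNum (block a j ℓ) := by
    rw [mul_wordNum_block hr, mul_wordNum_block hr, hb, hc, first_eq, last_eq]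
  exact wordNum_injective ℓ (Nat.cast_injective (mul_left_cancel₀ hk mul_eq))

theorem hUp_add_subadditive (x y z : ℕ → Bool)
    (hz : val z = Int.fract (val x + val y)) :
    hUp x - hUp y ≤ hUp z ∧ hUp z ≤ hUp x + hUp y := by
  have val_z : val z = val x + val y - ⌊val x + val y⌋ := hz
  constructor
  · refine sub_le_iff_le_add.mpr <| hUp_add_subadditive_general
      (k := 1) (s := 1) (t := -1) (m := ⌊val x + val y⌋) one_ne_zero ?_
    push_cast
    linear_combination -val_z
  · refine hUp_add_subadditive_general
      (k := 1) (s := 1) (t := 1) (m := -⌊val x + val y⌋) one_ne_zero ?_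
    push_cast
    linear_combination val_z
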